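/- (Variance–range comparison.) Let π(·|x) satisfy supp π(·|x) ⊆ supp μ(·|x) for every x. Define σ² := E_{x∼D}[ q_{π,x}ᵀ G_x q_{π,x} ], ρ := max over x in the support of D and slates s with μ(s|x) > 0 of |q_{π,x}ᵀ G_x 1_s|, and ρ̄ := max over x in the support of D and slates s with μ(s|x) > 0 of 1_sᵀ G_x 1_s. Then σ² ≤ ρ ≤ ρ̄. -/

import Mathlib

/-!
The pseudoinverse `G` of a symmetric positive semidefinite matrix is itself symmetric
(`pinv_transpose`) and positive semidefinite (`slateGamma_pinv_nonneg`), because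
`vᵀ G v = (G v)ᵀ Γ (G v)`. Writing `q_π` as the `π`-average of the indicators `1_t`, the value
`q_πᵀ G q_π` is the `π`-average of `q_πᵀ G 1_t`, and absolute continuity puts every relevant `t`
in the range of the maximum `ρ`; averaging over `D` gives `σ² ≤ ρ`. Likewise `q_πᵀ G 1_s` is the
`π`-average of `1_tᵀ G 1_s`, and `|1_tᵀ G 1_s| ≤ (1_tᵀ G 1_t + 1_sᵀ G 1_s) / 2 ≤ ρ̄` by
positive semidefiniteness.
-/

open Matrix BigOperators

/-- Indicator vector of a slate `s : Fin ℓ → A` in `ℝ^{(Fin ℓ) × A}`. -/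
noncomputable def slateInd {ℓ : ℕ} {A : Type*} [DecidableEq A] (s : Fin ℓ → A) :
    Fin ℓ × A → ℝ :=
  fun p => if s p.1 = p.2 then 1 else 0

/-- Second-moment matrix `Γ_μ := Σ_s μ(s)·1_s 1_sᵀ` of a distribution `μ` on slates. -/
noncomputable def slateGamma {ℓ : ℕ} {A : Type*} [Fintype A] [DecidableEq A]
    (μ : (Fin ℓ → A) → ℝ) : Matrix (Fin ℓ × A) (Fin ℓ × A) ℝ :=
  ∑ s : Fin ℓ → A, μ s • vecMulVec (slateInd s) (slateInd s)

/-- Marginal vector `q_π := Σ_s π(s)·1_s`. -/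
noncomputable def slateQ {ℓ : ℕ} {A : Type*} [Fintype A] [DecidableEq A]
    (π : (Fin ℓ → A) → ℝ) : Fin ℓ × A → ℝ :=
  ∑ s : Fin ℓ → A, π s • slateInd s

/-- A Moore–Penrose pseudoinverse of a symmetric matrix is symmetric. The transpose `Gᵀ` satisfies
the same four equations, so this is an instance of uniqueness of the pseudoinverse. -/
lemma pinv_transpose {n : Type*} [Fintype n] {S G : Matrix n n ℝ} (hS : Sᵀ = S)
    (h1 : S * G * S = S) (h2 : G * S * G = G)
    (h3 : (S * G)ᵀ = S * G) (h4 : (G * S)ᵀ = G * S) : Gᵀ = G := by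
  have h3' : Gᵀ * S = S * G := by rw [← h3, transpose_mul, hS]
  have h4' : S * Gᵀ = G * S := by rw [← h4, transpose_mul, hS]
  have hcomm : G * S = S * G := by
    have h1' : S * Gᵀ * S = S := by
      have := congrArg transpose h1
      rwa [transpose_mul, transpose_mul, hS, ← Matrix.mul_assoc] at this
    have e : G * S * (S * G) = G * S := by
      rw [← h3', Matrix.mul_assoc, ← Matrix.mul_assoc S, h1']
    have e' : G * S * (S * G) = S * G := by
      rw [← h4', ← Matrix.mul_assoc, h1']
    rw [← e, e']
  have h2' : Gᵀ * S * Gᵀ = Gᵀ := by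
    have := congrArg transpose h2
    rwa [transpose_mul, transpose_mul, hS, ← Matrix.mul_assoc] at this
  rw [← h2', Matrix.mul_assoc, h4', hcomm, ← Matrix.mul_assoc, h3', ← hcomm, h2]

lemma slateGamma_transpose {ℓ : ℕ} {A : Type*} [Fintype A] [DecidableEq A]
    (μ : (Fin ℓ → A) → ℝ) : (slateGamma μ)ᵀ = slateGamma μ := by
  simp [slateGamma, transpose_sum, transpose_vecMulVec]

lemma slateGamma_nonneg {ℓ : ℕ} {A : Type*} [Fintype A] [DecidableEq A]
    {μ : (Fin ℓ → A) → ℝ} (hμ : ∀ s, 0 ≤ μ s) (v : Fin ℓ × A → ℝ) :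
    0 ≤ v ⬝ᵥ slateGamma μ *ᵥ v := by
  rw [slateGamma, sum_mulVec, dotProduct_sum]
  refine Finset.sum_nonneg fun s _ => ?_
  rw [smul_mulVec, dotProduct_smul, vecMulVec_mulVec, smul_eq_mul]
  refine mul_nonneg (hμ s) ?_
  simp only [op_smul_eq_smul, dotProduct_smul, smul_eq_mul]
  rw [dotProduct_comm v]
  exact mul_self_nonneg _

lemma slateGamma_pinv_nonneg {ℓ : ℕ} {A : Type*} [Fintype A] [DecidableEq A]
    {μ : (Fin ℓ → A) → ℝ} (hμ : ∀ s, 0 ≤ μ s) {G : Matrix (Fin ℓ × A) (Fin ℓ × A) ℝ}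
    (hG : Gᵀ = G) (h2 : G * slateGamma μ * G = G) (v : Fin ℓ × A → ℝ) :
    0 ≤ v ⬝ᵥ G *ᵥ v := by
  have h := slateGamma_nonneg hμ (G *ᵥ v)
  have e : G *ᵥ v ⬝ᵥ slateGamma μ *ᵥ (G *ᵥ v) = v ⬝ᵥ G *ᵥ v := by
    rw [dotProduct_comm, dotProduct_mulVec, ← mulVec_transpose, hG, mulVec_mulVec, mulVec_mulVec,
      h2, dotProduct_comm]
  rwa [e] at h

/-- The arithmetic-mean form of the Cauchy–Schwarz inequality for a positive semidefinite form. -/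
lemma abs_form_le {n : Type*} [Fintype n] {G : Matrix n n ℝ} (hG : Gᵀ = G)
    (hpos : ∀ v, 0 ≤ v ⬝ᵥ G *ᵥ v) (u v : n → ℝ) :
    |u ⬝ᵥ G *ᵥ v| ≤ (u ⬝ᵥ G *ᵥ u + v ⬝ᵥ G *ᵥ v) / 2 := by
  have hs : v ⬝ᵥ G *ᵥ u = u ⬝ᵥ G *ᵥ v := by
    rw [dotProduct_mulVec, ← mulVec_transpose, hG, dotProduct_comm]
  have hp := hpos (u + v)
  have hm := hpos (u - v)
  simp only [mulVec_add, mulVec_sub, add_dotProduct, sub_dotProduct, dotProduct_add,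
    dotProduct_sub, hs] at hp hm
  rw [abs_le]
  constructor <;> linarith

/-- A weighted average is at most `c` when every value with positive weight is at most `c`. -/
lemma weighted_sum_le {ι : Type*} [Fintype ι] {w f : ι → ℝ} {c : ℝ} (h0 : ∀ i, 0 ≤ w i)
    (h1 : ∑ i, w i = 1) (h : ∀ i, 0 < w i → f i ≤ c) : ∑ i, w i * f i ≤ c := by
  calc ∑ i, w i * f i ≤ ∑ i, w i * c := by
        refine Finset.sum_le_sum fun i _ => ?_
        rcases (h0 i).eq_or_lt with hi | hi
        · simp [← hi]
        · exact mul_le_mul_of_nonneg_left (h i hi) hi.le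
    _ = c := by rw [← Finset.sum_mul, h1, one_mul]

/-- (Variance–range comparison.) If `supp π(·|x) ⊆ supp μ(·|x)` for every
`x`, then `σ² ≤ ρ ≤ ρ̄`, where `σ² := E_{x∼D}[q_{π,x}ᵀ G_x q_{π,x}]`, `ρ` is the maximum
of `|q_{π,x}ᵀ G_x 1_s|`, and `ρ̄` the maximum of `1_sᵀ G_x 1_s`, over `x` in the support
of `D` and slates `s` with `μ(s|x) > 0`. -/
theorem variance_range_comparison
    {ℓ : ℕ} (hℓ : 1 ≤ ℓ) {A : Type*} [Fintype A] [DecidableEq A]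
    {X : Type*} [Fintype X]
    (D : X → ℝ) (hD0 : ∀ x, 0 ≤ D x) (hD1 : ∑ x : X, D x = 1)
    (μ π : X → (Fin ℓ → A) → ℝ)
    (hμ0 : ∀ x s, 0 ≤ μ x s) (hμ1 : ∀ x, ∑ s : Fin ℓ → A, μ x s = 1)
    (hπ0 : ∀ x s, 0 ≤ π x s) (hπ1 : ∀ x, ∑ s : Fin ℓ → A, π x s = 1)
    -- ABS: supp π(·|x) ⊆ supp μ(·|x)
    (hABS : ∀ x s, 0 < π x s → 0 < μ x s)
    -- G_x: Moore–Penrose pseudoinverse of Γ_x := Γ_{μ(·|x)}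
    (G : X → Matrix (Fin ℓ × A) (Fin ℓ × A) ℝ)
    (hG1 : ∀ x, slateGamma (μ x) * G x * slateGamma (μ x) = slateGamma (μ x))
    (hG2 : ∀ x, G x * slateGamma (μ x) * G x = G x)
    (hG3 : ∀ x, (slateGamma (μ x) * G x)ᵀ = slateGamma (μ x) * G x)
    (hG4 : ∀ x, (G x * slateGamma (μ x))ᵀ = G x * slateGamma (μ x))
    -- σ²
    (σsq : ℝ)
    (hσsq : σsq = ∑ x : X, D x * (slateQ (π x) ⬝ᵥ (G x).mulVec (slateQ (π x))))
    -- ρ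
    (ρ : ℝ)
    (hρ : IsGreatest {v : ℝ | ∃ (x : X) (s : Fin ℓ → A), 0 < D x ∧ 0 < μ x s ∧
            v = |slateQ (π x) ⬝ᵥ (G x).mulVec (slateInd s)|} ρ)
    -- ρ̄
    (ρbar : ℝ)
    (hρbar : IsGreatest {v : ℝ | ∃ (x : X) (s : Fin ℓ → A), 0 < D x ∧ 0 < μ x s ∧
            v = slateInd s ⬝ᵥ (G x).mulVec (slateInd s)} ρbar) :
    σsq ≤ ρ ∧ ρ ≤ ρbar := by
  have hsymm : ∀ x, (G x)ᵀ = G x := fun x =>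
    pinv_transpose (slateGamma_transpose _) (hG1 x) (hG2 x) (hG3 x) (hG4 x)
  constructor
  · rw [hσsq]
    refine weighted_sum_le hD0 hD1 fun x hx => ?_
    have e : slateQ (π x) ⬝ᵥ G x *ᵥ slateQ (π x)
        = ∑ t, π x t * (slateQ (π x) ⬝ᵥ G x *ᵥ slateInd t) := by
      conv_lhs => rw [show G x *ᵥ slateQ (π x) = ∑ t, π x t • (G x *ᵥ slateInd t) by
        simp only [slateQ, mulVec_sum, mulVec_smul]]
      simp only [dotProduct_sum, dotProduct_smul, smul_eq_mul]
    rw [e]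
    exact weighted_sum_le (hπ0 x) (hπ1 x) fun t ht =>
      (le_abs_self _).trans (hρ.2 ⟨x, t, hx, hABS x t ht, rfl⟩)
  · obtain ⟨x, s, hx, hs, rfl⟩ := hρ.1
    have e : slateQ (π x) ⬝ᵥ G x *ᵥ slateInd s
        = ∑ t, π x t * (slateInd t ⬝ᵥ G x *ᵥ slateInd s) := by
      simp only [slateQ, sum_dotProduct, smul_dotProduct, smul_eq_mul]
    have hb : ∀ t, 0 < π x t → |slateInd t ⬝ᵥ G x *ᵥ slateInd s| ≤ ρbar := fun t ht => by
      have h := abs_form_le (hsymm x) (slateGamma_pinv_nonneg (hμ0 x) (hsymm x) (hG2 x))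
        (slateInd t) (slateInd s)
      have ht' := hρbar.2 ⟨x, t, hx, hABS x t ht, rfl⟩
      have hs' := hρbar.2 ⟨x, s, hx, hs, rfl⟩
      linarith
    rw [e]
    refine (Finset.abs_sum_le_sum_abs _ _).trans ?_
    simp only [abs_mul, abs_of_nonneg (hπ0 x _)]
    exact weighted_sum_le (hπ0 x) (hπ1 x) hb
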